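/- arXiv:1909.10898 — 2 statements merged into one kernel-verified Lean document; each statement's English description precedes it below -/
import Mathlib

section
/- Let X be a finite symmetric subset of D^k and let X̄ = {(x_1,…,x_k) ∈ X : x_i ≠ x_j for all 1 ≤ i ≠ j ≤ k}. If R ⊆ S_k is a set of representatives of the conjugacy classes of S_k, then |X̄| = Σ_{τ ∈ R} sign(τ)·C(τ)·|X_τ|, where sign(τ) = (−1)^{k−c(τ)} (c(τ) the number of disjoint cycles of τ, fixed points counted as cycles of length 1) and C(τ) is the cardinality of the conjugacy class of τ in S_k. -/
open scoped Classical

/-- Number of disjoint cycles of a permutation of `Fin k`,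
with fixed points counted as cycles of length 1. -/
def cycleCount {k : ℕ} (τ : Equiv.Perm (Fin k)) : ℕ :=
  τ.cycleType.card + (k - τ.support.card)

theorem neg_one_pow_sub_cycleCount {k : ℕ} (τ : Equiv.Perm (Fin k)) :
    (-1 : ℤ) ^ (k - cycleCount τ) = (Equiv.Perm.sign τ : ℤ) := by
  have hsupp : τ.support.card ≤ k := by
    simpa using Finset.card_le_univ τ.support
  have hcard : τ.cycleType.card ≤ τ.support.card := by
    rw [← τ.sum_cycleType]
    simpa using Multiset.card_nsmul_le_sum (s := τ.cycleType) (a := 1)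
      fun n hn => Equiv.Perm.one_lt_of_mem_cycleType hn |>.le
  have hexp : k - cycleCount τ = τ.support.card - τ.cycleType.card := by
    unfold cycleCount
    omega
  have hadd : τ.support.card + τ.cycleType.card =
      (τ.support.card - τ.cycleType.card) + 2 * τ.cycleType.card := by
    omega
  rw [Equiv.Perm.sign_of_cycleType, Equiv.Perm.sum_cycleType, hexp, hadd, pow_add, pow_mul]
  simp

/-- The signs of the permutations stabilizing a tuple sum to `1` if the tuple is injective
and to `0` otherwise. -/
theorem sum_sign_of_comp_eq {ι D : Type*} [Fintype ι] [DecidableEq ι] [DecidableEq D]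
    (x : ι → D) :
    ∑ τ ∈ Finset.univ.filter (fun τ : Equiv.Perm ι => x ∘ τ = x), (Equiv.Perm.sign τ : ℤ) =
      if Function.Injective x then 1 else 0 := by
  split_ifs with hx
  · have : (Finset.univ.filter fun τ : Equiv.Perm ι => x ∘ τ = x) = {1} := by
      ext τ
      simp only [Finset.mem_filter, Finset.mem_univ, true_and, Finset.mem_singleton]
      refine ⟨fun h => Equiv.ext fun i => hx (congrFun h i), ?_⟩
      rintro rfl
      rfl
    rw [this]
    simp
  · obtain ⟨i, j, hij, hne⟩ : ∃ i j, x i = x j ∧ i ≠ j := by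
      simpa [Function.Injective] using hx
    have hswap : x ∘ Equiv.swap i j = x := by
      funext l
      rcases eq_or_ne l i with rfl | hi
      · simp [hij]
      rcases eq_or_ne l j with rfl | hj
      · simp [hij]
      · simp [Equiv.swap_apply_of_ne_of_ne hi hj]
    refine Finset.sum_involution (fun τ _ => Equiv.swap i j * τ) ?_ ?_ ?_ ?_
    · intro τ _
      simp [Equiv.Perm.sign_swap hne]
    · intro τ _ _ h
      exact hne (Equiv.swap_eq_one_iff.mp (mul_eq_right.mp h))
    · intro τ hτ
      simp only [Finset.mem_filter, Finset.mem_univ, true_and] at hτ ⊢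
      rw [Equiv.Perm.coe_mul, ← Function.comp_assoc, hswap, hτ]
    · intro τ _
      simp

/-- The Li–Wan sieve as a sum over the whole symmetric group. -/
theorem card_filter_injective_eq_sum_sign {ι D : Type*} [Fintype ι] [DecidableEq ι]
    [DecidableEq D] (X : Finset (ι → D)) :
    ((X.filter fun x => Function.Injective x).card : ℤ) =
      ∑ τ : Equiv.Perm ι, (Equiv.Perm.sign τ : ℤ) *
        ((X.filter fun x => x ∘ τ = x).card : ℤ) := by
  simp_rw [Finset.natCast_card_filter, Finset.mul_sum, mul_ite, mul_one, mul_zero]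
  rw [Finset.sum_comm]
  refine Finset.sum_congr rfl fun x _ => ?_
  rw [← Finset.sum_filter, sum_sign_of_comp_eq]

/-- In a symmetric set of tuples, conjugate permutations fix equally many tuples. -/
theorem card_filter_comp_eq_of_isConj {ι D : Type*} [Fintype ι] [DecidableEq D]
    (X : Finset (ι → D))
    (hX : ∀ x ∈ X, ∀ τ : Equiv.Perm ι, x ∘ τ ∈ X) {τ σ : Equiv.Perm ι} (h : IsConj τ σ) :
    (X.filter fun x => x ∘ τ = x).card = (X.filter fun x => x ∘ σ = x).card := by
  obtain ⟨g, rfl⟩ := isConj_iff.mp h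
  refine Finset.card_bij' (fun x _ => x ∘ ⇑g⁻¹) (fun x _ => x ∘ ⇑g) ?_ ?_ ?_ ?_
  · intro x hx
    rw [Finset.mem_filter] at hx ⊢
    refine ⟨hX x hx.1 _, funext fun i => ?_⟩
    simpa using congrFun hx.2 (g⁻¹ i)
  · intro x hx
    rw [Finset.mem_filter] at hx ⊢
    refine ⟨hX x hx.1 _, funext fun i => ?_⟩
    simpa using congrFun hx.2 (g i)
  · intro x _
    funext i
    simp
  · intro x _
    funext i
    simp

/-- A class function sums over the group as over conjugacy class representatives,
weighted by class size. -/
theorem sum_eq_sum_card_isConj_mul {G A : Type*} [Group G] [Fintype G] [CommSemiring A]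
    [DecidableRel (IsConj : G → G → Prop)]
    (R : Finset G) (hR : ∀ g : G, ∃! r, r ∈ R ∧ IsConj r g) (f : G → A)
    (hf : ∀ g h, IsConj g h → f g = f h) :
    ∑ g, f g = ∑ r ∈ R, ((Finset.univ.filter fun g => IsConj r g).card : A) * f r := by
  choose rep hrep huniq using hR
  rw [← Finset.sum_fiberwise_of_maps_to (g := rep) fun g _ => (hrep g).1]
  refine Finset.sum_congr rfl fun r hr => ?_
  have hfiber : ∀ g, rep g = r ↔ IsConj r g := fun g =>
    ⟨fun h => h ▸ (hrep g).2, fun h => (huniq g r ⟨hr, h⟩).symm⟩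
  simp_rw [hfiber]
  rw [Finset.sum_congr rfl fun g hg => (hf r g (Finset.mem_filter.mp hg).2).symm,
    Finset.sum_const, nsmul_eq_mul]

/-- **Li–Wan sieve, symmetric form.**  If `X ⊆ D^k` is finite and symmetric and `R` is a
set of representatives of the conjugacy classes of `S_k`, then the number of tuples in `X`
with pairwise distinct coordinates equals `Σ_{τ ∈ R} sign(τ)·C(τ)·|X_τ|`, where
`C(τ)` is the size of the conjugacy class of `τ`. -/
theorem li_wan_sieve_symmetric {D : Type*} [DecidableEq D] (k : ℕ) (hk : 0 < k)
    (X : Finset (Fin k → D))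
    (hX : ∀ x ∈ X, ∀ τ : Equiv.Perm (Fin k), x ∘ τ ∈ X)
    (R : Finset (Equiv.Perm (Fin k)))
    (hR : ∀ σ : Equiv.Perm (Fin k), ∃! τ, τ ∈ R ∧ IsConj τ σ) :
    ((X.filter fun x => Function.Injective x).card : ℤ) =
      ∑ τ ∈ R, (-1 : ℤ) ^ (k - cycleCount τ) *
        ((Finset.univ.filter fun σ : Equiv.Perm (Fin k) => IsConj τ σ).card : ℤ) *
        ((X.filter fun x => x ∘ τ = x).card : ℤ) := by
  have hclass : ∀ τ σ : Equiv.Perm (Fin k), IsConj τ σ →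
      (Equiv.Perm.sign τ : ℤ) * ((X.filter fun x => x ∘ τ = x).card : ℤ) =
        (Equiv.Perm.sign σ : ℤ) * ((X.filter fun x => x ∘ σ = x).card : ℤ) := by
    intro τ σ h
    rw [card_filter_comp_eq_of_isConj X hX h, isConj_iff_eq.mp (Equiv.Perm.sign.map_isConj h)]
  rw [card_filter_injective_eq_sum_sign, sum_eq_sum_card_isConj_mul R hR _ hclass]
  refine Finset.sum_congr rfl fun τ _ => ?_
  rw [neg_one_pow_sub_cycleCount, mul_left_comm, mul_assoc]
end

section
/- Let X be a finite symmetric subset of D^k and let d be a positive integer with d ≤ k. Then k!·|M̄_d(X)| = Σ_{τ ∈ S_k} w̄_d(τ)·|X_τ|. -/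
/-- The multiset `[x_1, …, x_k]` associated to a tuple `(x_1, …, x_k)`. -/
def msetOf {D : Type*} {k : ℕ} (x : Fin k → D) : Multiset D :=
  (List.ofFn x : Multiset D)

/-- The cycle lengths of a permutation of `Fin k`, with fixed points counted
as cycles of length 1. -/
def fullCycleType {k : ℕ} (τ : Equiv.Perm (Fin k)) : Multiset ℕ :=
  τ.cycleType + Multiset.replicate (k - τ.support.card) 1

/-- The weight `w̄_d(τ)`: the coefficient of `x^d` in `∏_i (1 - (1-x)^{ℓ_i})`,
the product taken over the cycle lengths `ℓ_i` of `τ`. -/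
noncomputable def wbar {k : ℕ} (d : ℕ) (τ : Equiv.Perm (Fin k)) : ℤ :=
  (((fullCycleType τ).map fun ℓ =>
    (1 - (1 - Polynomial.X) ^ ℓ : Polynomial ℤ)).prod).coeff d

/-- `M(X)`: the set of `k`-multisets `[x_1,…,x_k]` for `(x_1,…,x_k) ∈ X`. -/
def MX {D : Type*} [DecidableEq D] {k : ℕ} (X : Finset (Fin k → D)) : Finset (Multiset D) :=
  X.image msetOf

/-- `M̄_d(X)`: multisets in `M(X)` with exactly `d` distinct elements. -/
def Mbar {D : Type*} [DecidableEq D] {k : ℕ} (d : ℕ) (X : Finset (Fin k → D)) :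
    Finset (Multiset D) :=
  (MX X).filter fun m => m.toFinset.card = d

open Equiv Finset

theorem sum_card_stabilizer_of_transitive {H α : Type*} [Group H] [DecidableEq α]
    (act : H → α → α) (act_mul : ∀ g h a, act (g * h) a = act g (act h a))
    (G : Finset H) (G_mul : ∀ g ∈ G, ∀ h ∈ G, g * h ∈ G) (G_inv : ∀ g ∈ G, g⁻¹ ∈ G)
    (A : Finset α) (a₀ : α) (hA : ∀ a, a ∈ A ↔ ∃ g ∈ G, act g a₀ = a) :
    ∑ a ∈ A, #{g ∈ G | act g a = a} = #G := by
  rw [card_eq_sum_card_fiberwise (f := fun g => act g a₀) (t := A)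
    (fun g hg => (hA _).2 ⟨g, hg, rfl⟩)]
  refine sum_congr rfl fun a ha => ?_
  obtain ⟨s, hs, rfl⟩ := (hA a).1 ha
  refine card_nbij' (fun g => g * s) (fun g => g * s⁻¹) ?_ ?_ ?_ ?_
  · intro g hg
    simp only [coe_filter, Set.mem_ofPred_eq] at hg ⊢
    exact ⟨G_mul _ hg.1 _ hs, by rw [act_mul, hg.2]⟩
  · intro g hg
    simp only [coe_filter, Set.mem_ofPred_eq] at hg ⊢
    refine ⟨G_mul _ hg.1 _ (G_inv _ hs), ?_⟩
    rw [← act_mul, inv_mul_cancel_right, hg.2]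
  · intro g _; simp
  · intro g _; simp

section CycleDet

variable {α R : Type*} [DecidableEq α] [CommRing R]

/-- The permutation matrix of `σ` with the rows and columns of fixed points erased. -/
def movedMatrix (R : Type*) [CommRing R] (σ : Perm α) : Matrix α α R :=
  Matrix.of fun j i => if j = σ i ∧ σ i ≠ i then 1 else 0

theorem movedMatrix_mul_perm {σ τ : Perm α} (h : σ.Disjoint τ) :
    movedMatrix R (σ * τ) = movedMatrix R σ + movedMatrix R τ := by
  ext j i
  simp only [movedMatrix, Matrix.of_apply, Matrix.add_apply, Perm.mul_apply]
  rcases h i with h1 | h1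
  · have h2 : σ (τ i) = τ i := by
      rcases h (τ i) with h3 | h3
      · exact h3
      · rw [τ.injective h3, h1]
    simp [h1, h2]
  · simp [h1]

variable [Fintype α]

theorem movedMatrix_mul_eq_zero {σ τ : Perm α} (h : σ.Disjoint τ) :
    movedMatrix R σ * movedMatrix R τ = 0 := by
  ext l i
  rw [Matrix.mul_apply, Matrix.zero_apply]
  refine sum_eq_zero fun j _ => ?_
  simp only [movedMatrix, Matrix.of_apply, mul_ite, mul_one, mul_zero]
  by_cases h1 : j = τ i ∧ τ i ≠ i
  · rw [if_pos h1, if_neg]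
    rintro ⟨-, h2⟩
    rcases h j with h3 | h3
    · exact h2 h3
    · rw [h1.1] at h3
      exact h1.2 (τ.injective h3)
  · rw [if_neg h1]

theorem det_one_sub_movedMatrix_of_isCycle (u : R) {c : Perm α} (hc : c.IsCycle) :
    (1 - u • movedMatrix R c).det = 1 - u ^ #c.support := by
  have key : ∀ π : Perm α, π ≠ 1 → π ≠ c →
      ∏ i, (1 - u • movedMatrix R c) (π i) i = 0 := by
    intro π h1 h2
    by_contra hne
    have hstep : ∀ i, π i = i ∨ π i = c i ∧ c i ≠ i := by
      intro i
      by_contra hi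
      push Not at hi
      refine hne (prod_eq_zero (mem_univ i) ?_)
      have : ¬ (π i = c i ∧ c i ≠ i) := fun h => h.2 (hi.2 h.1)
      simp [movedMatrix, hi.1, this]
    obtain ⟨i, hi⟩ : ∃ i, π i ≠ i := by
      by_contra! h
      exact h1 (Perm.ext h)
    have hci := (hstep i).resolve_left hi
    have hpow : ∀ n : ℕ, π ((c ^ n) i) = c ((c ^ n) i) := by
      intro n
      induction n with
      | zero => exact hci.1
      | succ n ih =>
        rw [pow_succ', Perm.mul_apply]
        rcases hstep (c ((c ^ n) i)) with h | h
        · have h3 : c ((c ^ n) i) = (c ^ n) i := π.injective (h.trans ih.symm)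
          rw [h3, ih]
        · exact h.1
    refine h2 (Perm.ext fun j => ?_)
    by_cases hj : c j = j
    · rcases hstep j with h | h
      · rw [h, hj]
      · exact h.1
    · obtain ⟨n, rfl⟩ := hc.exists_pow_eq hci.2 hj
      exact hpow n
  have hc1 : (1 : Perm α) ≠ c := hc.ne_one.symm
  rw [Matrix.det_apply', ← sum_subset (subset_univ {1, c}), sum_pair hc1]
  · have e1 : ∏ i, (1 - u • movedMatrix R c) ((1 : Perm α) i) i = 1 := by
      refine prod_eq_one fun i _ => ?_
      have : ¬ (i = c i ∧ c i ≠ i) := fun h => h.2 h.1.symm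
      simp [movedMatrix, this]
    have e2 : ∏ i, (1 - u • movedMatrix R c) (c i) i = (-u) ^ #c.support := by
      rw [← prod_const, ← prod_subset (subset_univ c.support)]
      · refine prod_congr rfl fun i hi => ?_
        have := Perm.mem_support.1 hi
        simp [movedMatrix, this]
      · intro i _ hi
        have := Perm.notMem_support.1 hi
        simp [movedMatrix, this]
    rw [e1, e2, hc.sign, Perm.sign_one, neg_pow u]
    have : ((-1 : R) ^ #c.support) * (-1) ^ #c.support = 1 := by
      rw [← mul_pow]; simp
    push_cast
    linear_combination (-u ^ #c.support) * this
  · intro π _ hπ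
    simp only [mem_insert, mem_singleton, not_or] at hπ
    rw [key π hπ.1 hπ.2, mul_zero]

theorem det_one_sub_movedMatrix (u : R) (τ : Perm α) :
    (1 - u • movedMatrix R τ).det = (τ.cycleType.map fun ℓ => 1 - u ^ ℓ).prod := by
  induction τ using Perm.cycle_induction_on with
  | base_one =>
    have : movedMatrix R (1 : Perm α) = 0 := by ext; simp [movedMatrix]
    simp [this]
  | base_cycles c hc => simp [det_one_sub_movedMatrix_of_isCycle u hc, hc.cycleType]
  | induction_disjoint σ τ h _ h1 h2 =>
    rw [h.cycleType_mul, Multiset.map_add, Multiset.prod_add, ← h1, ← h2, ← Matrix.det_mul,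
      movedMatrix_mul_perm h]
    congr 1
    simp only [sub_mul, mul_sub, one_mul, mul_one, Matrix.smul_mul, Matrix.mul_smul,
      movedMatrix_mul_eq_zero h, smul_zero, smul_add]
    abel

theorem det_one_sub_smul_perm (u : R) (τ : Perm α) :
    (Matrix.of fun j i => (if j = i then 1 else 0) + (if j = τ i then -u else 0)).det =
      (τ.cycleType.map fun ℓ => 1 - u ^ ℓ).prod * (1 - u) ^ (Fintype.card α - #τ.support) := by
  have hfix : ∏ i, (if τ i = i then 1 - u else 1) = (1 - u) ^ (Fintype.card α - #τ.support) := by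
    rw [← card_compl, ← prod_const, prod_ite, prod_const_one, mul_one]
    refine prod_congr ?_ fun _ _ => rfl
    ext i; simp
  rw [← det_one_sub_movedMatrix, ← hfix, ← Matrix.det_diagonal, ← Matrix.det_mul]
  congr 1
  ext j i
  rw [Matrix.mul_diagonal]
  by_cases h : τ i = i
  · by_cases hj : j = i <;> simp [movedMatrix, h, hj, sub_eq_add_neg]
  · by_cases hj : j = τ i <;> simp [movedMatrix, Matrix.one_apply, h, hj, sub_eq_add_neg]

end CycleDet

section StabilizerSum

variable {α D R : Type*} [DecidableEq α] [CommRing R]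

theorem exists_perm_image_eq [DecidableEq D] (x : α → D) {S T : Finset α} (hS : Set.InjOn x S)
    (hT : Set.InjOn x T) (h : S.image x = T.image x) :
    ∃ τ : Perm α, x ∘ τ = x ∧ S.image τ = T := by
  rcases isEmpty_or_nonempty α with hα | hα
  · exact ⟨1, rfl, by rw [eq_empty_of_isEmpty S, eq_empty_of_isEmpty T, image_empty]⟩
  have hs : ∀ c ∈ S.image x, ∃ i ∈ S, x i = c := fun c hc => mem_image.1 hc
  have ht : ∀ c ∈ S.image x, ∃ i ∈ T, x i = c := fun c hc => mem_image.1 (h ▸ hc)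
  choose! s hsS hs using hs
  choose! t htT ht using ht
  let f : α → α := fun i => if x i ∈ S.image x then swap (s (x i)) (t (x i)) i else i
  have hxf : ∀ i, x (f i) = x i := by
    intro i
    by_cases hi : x i ∈ S.image x
    · simp only [f, if_pos hi, swap_apply_def]
      split_ifs with h1 h2
      · exact ht _ hi
      · exact hs _ hi
      · rfl
    · simp only [f, if_neg hi]
  have hf : Function.Involutive f := by
    intro i
    by_cases hi : x i ∈ S.image x
    · have h1 : f (f i) = swap (s (x i)) (t (x i)) (f i) := by
        rw [← hxf i] at hi ⊢
        exact if_pos hi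
      rw [h1]
      simp only [f, if_pos hi, swap_apply_self]
    · have h1 : f i = i := if_neg hi
      rw [h1, h1]
  have hST : ∀ c ∈ S.image x, f (s c) = t c := by
    intro c hc
    simp only [f, hs c hc, if_pos hc, swap_apply_left]
  refine ⟨hf.toPerm, funext hxf, ?_⟩
  rw [Function.Involutive.coe_toPerm]
  ext j
  rw [mem_image]
  constructor
  · rintro ⟨i, hi, rfl⟩
    have hc := mem_image_of_mem x hi
    have : s (x i) = i := hS (hsS _ hc) hi (hs _ hc)
    rw [← this, hST _ hc]
    exact htT _ hc
  · intro hj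
    have hc : x j ∈ S.image x := h ▸ mem_image_of_mem x hj
    exact ⟨s (x j), hsS _ hc, (hST _ hc).trans (hT (htT _ hc) hj (ht _ hc))⟩

variable [Fintype α]

/-- The matrix whose columns indexed by `S` are those of the permutation matrix of `τ`, the other
columns being those of the identity matrix. -/
def mixedPermMatrix (R : Type*) [CommRing R] (S : Finset α) (τ : Perm α) : Matrix α α R :=
  Matrix.of fun j i => if i ∈ S then (if j = τ i then 1 else 0) else (if j = i then 1 else 0)

theorem det_eq_sum_mixedPermMatrix (u : R) (τ : Perm α) :
    (Matrix.of fun j i => (if j = i then 1 else 0) + (if j = τ i then -u else 0)).det =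
      ∑ S : Finset α, (-u) ^ #S * (mixedPermMatrix R S τ).det := by
  simp_rw [Matrix.det_apply', mul_sum]
  rw [sum_comm]
  refine sum_congr rfl fun π _ => ?_
  simp_rw [Matrix.of_apply]
  rw [prod_congr rfl fun i _ => add_comm _ _, Fintype.prod_add, mul_sum]
  refine sum_congr rfl fun S _ => ?_
  rw [← prod_mul_prod_compl S (fun i => mixedPermMatrix R S τ (π i) i)]
  have e1 : ∏ i ∈ S, (if π i = τ i then -u else 0) =
      (-u) ^ #S * ∏ i ∈ S, mixedPermMatrix R S τ (π i) i := by
    rw [← prod_const, ← prod_mul_distrib]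
    refine prod_congr rfl fun i hi => ?_
    simp [mixedPermMatrix, hi]
  have e2 : ∏ i ∈ Sᶜ, (if π i = i then (1 : R) else 0) =
      ∏ i ∈ Sᶜ, mixedPermMatrix R S τ (π i) i := by
    refine prod_congr rfl fun i hi => ?_
    simp [mixedPermMatrix, mem_compl.1 hi]
  rw [e1, e2]
  ring

theorem det_mixedPermMatrix_of_injOn (x : α → D) {S : Finset α} (hS : Set.InjOn x S)
    {τ : Perm α} (hτ : x ∘ τ = x) :
    (mixedPermMatrix R S τ).det = if S.image τ = S then 1 else 0 := by
  have himage : S.image τ = S ↔ ∀ i ∈ S, τ i = i := by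
    constructor
    · intro h i hi
      exact hS (h ▸ mem_image_of_mem τ hi) hi (congrFun hτ i)
    · intro h
      exact (image_congr (g := id) h).trans image_id
  rw [Matrix.det_apply', sum_eq_single_of_mem 1 (mem_univ _)]
  · simp only [Perm.sign_one, Units.val_one, Int.cast_one, one_mul, Perm.one_apply, himage]
    split_ifs with h
    · refine prod_eq_one fun i _ => ?_
      by_cases hi : i ∈ S <;> simp [mixedPermMatrix, hi, h]
    · push Not at h
      obtain ⟨i, hi, h⟩ := h
      refine prod_eq_zero (mem_univ i) ?_
      simp [mixedPermMatrix, hi, h.symm]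
  · intro π _ hπ
    by_contra hne
    have hentry : ∀ i, mixedPermMatrix R S τ (π i) i ≠ 0 := fun i hi =>
      hne (mul_eq_zero_of_right _ (prod_eq_zero (mem_univ i) hi))
    have hout : ∀ i ∉ S, π i = i := by
      intro i hi
      by_contra h
      exact hentry i (by simp [mixedPermMatrix, hi, h])
    have hin : ∀ i ∈ S, π i = τ i := by
      intro i hi
      by_contra h
      exact hentry i (by simp [mixedPermMatrix, hi, h])
    refine hπ (Perm.ext fun i => ?_)
    by_cases hi : i ∈ S
    · have hmem : π i ∈ S := by
        by_contra h
        exact h (by rwa [π.injective (hout _ h)])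
      refine hS hmem hi ?_
      rw [hin i hi]
      exact congrFun hτ i
    · exact hout i hi

variable [DecidableEq D]

/-- The permutations `τ` preserving the fibres of `x`. -/
def fiberStabilizer (x : α → D) : Finset (Perm α) := {τ | x ∘ τ = x}

theorem mem_fiberStabilizer {x : α → D} {τ : Perm α} :
    τ ∈ fiberStabilizer x ↔ x ∘ τ = x := by
  simp [fiberStabilizer]

theorem sum_det_mixedPermMatrix_eq_zero (x : α → D) {S : Finset α}
    (hS : ¬ Set.InjOn x S) :
    ∑ τ ∈ fiberStabilizer x, (mixedPermMatrix R S τ).det = 0 := by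
  simp only [Set.InjOn, mem_coe] at hS
  push Not at hS
  obtain ⟨a, ha, b, hb, hab, hne⟩ := hS
  have hx : x ∘ swap a b = x := by
    ext i
    simp only [Function.comp_apply, swap_apply_def]
    split_ifs with h1 h2
    · rw [h1, hab]
    · rw [h2, hab]
    · rfl
  refine sum_involution (fun τ _ => τ * swap a b) ?_ ?_ ?_ ?_
  · intro τ _
    have : mixedPermMatrix R S (τ * swap a b) =
        (mixedPermMatrix R S τ).submatrix id (swap a b) := by
      ext j i
      have hmem : swap a b i ∈ S ↔ i ∈ S := by
        simp only [swap_apply_def]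
        split_ifs with h1 h2
        · simp [h1, ha, hb]
        · simp [h2, ha, hb]
        · rfl
      by_cases hi : i ∈ S
      · simp only [mixedPermMatrix, Matrix.of_apply, Matrix.submatrix_apply, hmem, hi, if_true]
        rfl
      · have h1 : i ≠ a := fun h => hi (h ▸ ha)
        have h2 : i ≠ b := fun h => hi (h ▸ hb)
        simp [mixedPermMatrix, hi, swap_apply_of_ne_of_ne h1 h2]
    rw [this, Matrix.det_permute', Perm.sign_swap hne]
    simp
  · intro τ _ _ h
    exact hne (swap_eq_one_iff.1 (mul_eq_left.1 h))
  · intro τ hτ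
    rw [mem_fiberStabilizer] at hτ ⊢
    rw [Perm.coe_mul, ← Function.comp_assoc, hτ, hx]
  · intro τ _
    simp [mul_assoc]

theorem mul_mem_fiberStabilizer {x : α → D} {σ τ : Perm α} (hσ : σ ∈ fiberStabilizer x)
    (hτ : τ ∈ fiberStabilizer x) : σ * τ ∈ fiberStabilizer x := by
  rw [mem_fiberStabilizer] at *
  rw [Perm.coe_mul, ← Function.comp_assoc, hσ, hτ]

theorem inv_mem_fiberStabilizer {x : α → D} {σ : Perm α} (hσ : σ ∈ fiberStabilizer x) :
    σ⁻¹ ∈ fiberStabilizer x := by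
  rw [mem_fiberStabilizer] at *
  ext i
  simpa using (congrFun hσ (σ⁻¹ i)).symm

open Classical in
theorem sum_card_image_eq_self (x : α → D) {T : Finset D} (hT : T ⊆ univ.image x) :
    ∑ S ∈ univ.filter fun S : Finset α => Set.InjOn x (S : Set α) ∧ S.image x = T,
      #((fiberStabilizer x).filter fun τ : Perm α => S.image τ = S) = #(fiberStabilizer x) := by
  obtain ⟨S₀, -, hS₀, himg⟩ := exists_subset_injOn_image_eq_of_surjOn (f := x) Set.univ T
    (fun c hc => by simpa using hT hc)
  refine sum_card_stabilizer_of_transitive (fun (τ : Perm α) (S : Finset α) => S.image τ)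
    (fun σ τ S => ?_) _ (fun _ hσ _ hτ => mul_mem_fiberStabilizer hσ hτ)
    (fun _ h => inv_mem_fiberStabilizer h) _ S₀ (fun S => ?_)
  · simp only [image_image, Perm.coe_mul]
  · simp only [mem_filter, mem_univ, true_and, mem_fiberStabilizer]
    constructor
    · rintro ⟨hS, h⟩
      exact exists_perm_image_eq x hS₀ hS (himg.trans h.symm)
    · rintro ⟨τ, hτ, rfl⟩
      refine ⟨?_, by rw [image_image, hτ, himg]⟩
      rw [coe_image]
      refine Set.InjOn.image_of_comp ?_
      rwa [hτ]

theorem sum_det_fiberStabilizer (x : α → D) (u : R) :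
    ∑ τ ∈ fiberStabilizer x,
      (Matrix.of fun j i => (if j = i then 1 else 0) + (if j = τ i then -u else 0)).det =
      #(fiberStabilizer x) * (1 - u) ^ #(univ.image x) := by
  classical
  simp_rw [det_eq_sum_mixedPermMatrix]
  rw [sum_comm]
  simp_rw [← mul_sum]
  have hinj : ∀ S : Finset α, Set.InjOn x (S : Set α) →
      (-u) ^ #S * ∑ τ ∈ fiberStabilizer x, (mixedPermMatrix R S τ).det =
      (-u) ^ #(S.image x) * #((fiberStabilizer x).filter fun τ : Perm α => S.image τ = S) := by
    intro S hS
    rw [card_image_of_injOn hS, ← sum_boole]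
    congr 1
    exact sum_congr rfl fun τ hτ =>
      det_mixedPermMatrix_of_injOn (R := R) x hS (mem_fiberStabilizer.1 hτ)
  rw [← sum_filter_of_ne (p := fun S : Finset α => Set.InjOn x (S : Set α)),
    sum_congr rfl fun S hS => hinj S (mem_filter.1 hS).2,
    ← sum_fiberwise_of_maps_to (t := (univ.image x).powerset) (g := Finset.image x)]
  · have hpow := prod_one_add (R := R) (f := fun _ : D => -u) (univ.image x)
    simp only [prod_const, ← sub_eq_add_neg] at hpow
    rw [hpow, mul_sum]
    refine sum_congr rfl fun T hT => ?_
    rw [filter_filter, ← sum_card_image_eq_self x (mem_powerset.1 hT), Nat.cast_sum, sum_mul]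
    refine sum_congr rfl fun S hS => ?_
    rw [(mem_filter.1 hS).2.2, mul_comm]
  · intro S _
    exact mem_powerset.2 (image_subset_image (subset_univ S))
  · intro S _ hne
    by_contra hS
    exact hne (by rw [sum_det_mixedPermMatrix_eq_zero x hS, mul_zero])

end StabilizerSum

theorem msetOf_eq_map {D : Type*} {k : ℕ} (x : Fin k → D) :
    msetOf x = (univ : Finset (Fin k)).val.map x := by
  simp [msetOf]

theorem toFinset_msetOf {D : Type*} [DecidableEq D] {k : ℕ} (x : Fin k → D) :
    (msetOf x).toFinset = univ.image x := by
  rw [msetOf_eq_map, Multiset.toFinset_map, val_toFinset]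

theorem msetOf_comp_perm {D : Type*} {k : ℕ} (x : Fin k → D) (τ : Perm (Fin k)) :
    msetOf (x ∘ τ) = msetOf x :=
  Multiset.coe_eq_coe.2 (τ.ofFn_comp_perm x)

theorem exists_perm_of_msetOf_eq {D : Type*} [DecidableEq D] {k : ℕ} {x y : Fin k → D}
    (h : msetOf x = msetOf y) : ∃ τ : Perm (Fin k), x ∘ τ = y := by
  have hcard : ∀ c, Fintype.card {i // y i = c} = Fintype.card {i // x i = c} := by
    intro c
    have hc := congrArg (Multiset.count c) h
    rw [msetOf_eq_map, msetOf_eq_map, Multiset.count_map, Multiset.count_map] at hc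
    rw [Fintype.card_subtype, Fintype.card_subtype, card_def, card_def, filter_val, filter_val]
    simpa only [eq_comm] using hc.symm
  let e : ∀ c, {i // y i = c} ≃ {i // x i = c} := fun c => Fintype.equivOfCardEq (hcard c)
  exact ⟨ofFiberEquiv e, funext (ofFiberEquiv_map e)⟩

theorem prod_fullCycleType_eq_det {k : ℕ} (τ : Perm (Fin k)) (u : Polynomial ℤ) :
    ((fullCycleType τ).map fun ℓ => 1 - u ^ ℓ).prod =
      (Matrix.of fun j i => (if j = i then 1 else 0) + (if j = τ i then -u else 0)).det := by
  rw [det_one_sub_smul_perm, fullCycleType, Multiset.map_add, Multiset.prod_add]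
  simp

theorem sum_wbar_fiberStabilizer {D : Type*} [DecidableEq D] {k : ℕ} (d : ℕ) (x : Fin k → D) :
    ∑ τ ∈ fiberStabilizer x, wbar d τ =
      if #(msetOf x).toFinset = d then (#(fiberStabilizer x) : ℤ) else 0 := by
  have h := congrArg (Polynomial.coeff · d)
    (sum_det_fiberStabilizer x (1 - Polynomial.X : Polynomial ℤ))
  simp only [← prod_fullCycleType_eq_det, Polynomial.finsetSum_coeff, sub_sub_cancel,
    ← toFinset_msetOf, ← Polynomial.C_eq_natCast, Polynomial.coeff_C_mul,
    Polynomial.coeff_X_pow] at h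
  simpa [wbar, eq_comm] using h

theorem sum_card_fiberStabilizer {D : Type*} [DecidableEq D] {k : ℕ} (X : Finset (Fin k → D))
    (hX : ∀ x ∈ X, ∀ τ : Perm (Fin k), x ∘ τ ∈ X) {m : Multiset D} (hm : m ∈ MX X) :
    ∑ x ∈ X with msetOf x = m, #(fiberStabilizer x) = k.factorial := by
  obtain ⟨x₀, hx₀, rfl⟩ := mem_image.1 hm
  have h := sum_card_stabilizer_of_transitive
    (fun (τ : Perm (Fin k)) (x : Fin k → D) => x ∘ ⇑τ⁻¹) (fun σ τ x => by ext; simp)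
    univ (fun _ _ _ _ => mem_univ _) (fun _ _ => mem_univ _)
    {x ∈ X | msetOf x = msetOf x₀} x₀ (fun x => ?_)
  · rw [card_univ, Fintype.card_perm, Fintype.card_fin] at h
    rw [← h]
    refine sum_congr rfl fun x _ => card_nbij' (·⁻¹) (·⁻¹) ?_ ?_ ?_ ?_
    · intro τ hτ
      simp only [coe_filter, mem_univ, true_and, Set.mem_ofPred_eq, inv_inv]
      exact mem_fiberStabilizer.1 hτ
    · intro τ hτ
      simpa [mem_fiberStabilizer] using hτ
    · intro τ _; simp
    · intro τ _; simp
  · simp only [mem_filter, mem_univ, true_and]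
    constructor
    · rintro ⟨-, hx⟩
      obtain ⟨τ, rfl⟩ := exists_perm_of_msetOf_eq hx.symm
      exact ⟨τ⁻¹, by rw [inv_inv]⟩
    · rintro ⟨τ, rfl⟩
      exact ⟨hX _ hx₀ _, msetOf_comp_perm _ _⟩

/-- For a finite symmetric `X ⊆ D^k` and `1 ≤ d ≤ k`,
`k!·|M̄_d(X)| = Σ_{τ ∈ S_k} w̄_d(τ)·|X_τ|`. -/
theorem multiset_sieve_distinct {D : Type*} [DecidableEq D] (k d : ℕ) (hk : 0 < k)
    (hd : 0 < d) (hdk : d ≤ k) (X : Finset (Fin k → D))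
    (hX : ∀ x ∈ X, ∀ τ : Equiv.Perm (Fin k), x ∘ τ ∈ X) :
    (Nat.factorial k : ℤ) * ((Mbar d X).card : ℤ) =
      ∑ τ : Equiv.Perm (Fin k), wbar d τ * ((X.filter fun x => x ∘ τ = x).card : ℤ) := by
  calc
    (Nat.factorial k : ℤ) * ((Mbar d X).card : ℤ)
      = ∑ m ∈ Mbar d X, ∑ x ∈ X with msetOf x = m, (#(fiberStabilizer x) : ℤ) := by
        rw [mul_comm, ← nsmul_eq_mul, ← sum_const]
        refine sum_congr rfl fun m hm => ?_
        rw [← sum_card_fiberStabilizer X hX (mem_filter.1 hm).1, Nat.cast_sum]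
    _ = ∑ m ∈ MX X, ∑ x ∈ X with msetOf x = m, ∑ τ ∈ fiberStabilizer x, wbar d τ := by
        rw [Mbar, sum_filter]
        refine sum_congr rfl fun m _ => ?_
        simp_rw [sum_wbar_fiberStabilizer]
        split_ifs with h
        · refine sum_congr rfl fun x hx => ?_
          rw [(mem_filter.1 hx).2, if_pos h]
        · refine (sum_eq_zero fun x hx => ?_).symm
          rw [(mem_filter.1 hx).2, if_neg h]
    _ = ∑ x ∈ X, ∑ τ ∈ fiberStabilizer x, wbar d τ :=
        sum_fiberwise_of_maps_to (fun x hx => mem_image_of_mem _ hx) _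
    _ = ∑ τ : Perm (Fin k), wbar d τ * ((X.filter fun x => x ∘ τ = x).card : ℤ) := by
        simp_rw [fiberStabilizer, sum_filter]
        rw [sum_comm]
        refine sum_congr rfl fun τ _ => ?_
        rw [← sum_filter, sum_const, nsmul_eq_mul, mul_comm]
end
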